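/- Let n be a natural number and let (X, ≺, ⋆) be a well-founded accessible pointed graph such that X/x is extensional whenever the node x admits a path of length exactly n to the root. Then there exist a well-founded extensional accessible pointed graph (X̄, ≺, ⋆̄) (on a type in the same universe) and a surjective simulation q : X → X̄ with q ⋆ = ⋆̄. -/

import Mathlib

universe u v

/-- A relation is (inductively) well-founded if every inductive subset is the whole type:
`S` is inductive when `x ∈ S` whenever every child of `x` is in `S`. -/
def IsWFRel {X : Type u} (r : X → X → Prop) : Prop :=
  ∀ S : Set X, (∀ x, (∀ y, r y x → y ∈ S) → x ∈ S) → S = Set.univ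

/-- A relation is extensional if nodes with the same children are equal. -/
def IsExtRel {X : Type u} (r : X → X → Prop) : Prop :=
  ∀ x y, (∀ z, r z x ↔ r z y) → x = y

/-- `Below r x` is the full subgraph `X/x` of nodes admitting a (possibly empty) path to `x`. -/
def Below {X : Type u} (r : X → X → Prop) (x : X) : Type u :=
  {z : X // Relation.ReflTransGen r z x}

/-- The induced relation on the subgraph `X/x`. -/
def belowRel {X : Type u} (r : X → X → Prop) (x : X) :
    Below r x → Below r x → Prop :=
  fun a b => r a.1 b.1

/-- The root of the pointed subgraph `X/x`. -/
def belowRoot {X : Type u} (r : X → X → Prop) (x : X) : Below r x :=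
  ⟨x, Relation.ReflTransGen.refl⟩

/-- Isomorphism of pointed graphs: a relation-preserving-and-reflecting bijection
taking the first distinguished point to the second. -/
def PIso {X : Type u} {Y : Type v} (rX : X → X → Prop) (rY : Y → Y → Prop)
    (x : X) (y : Y) : Prop :=
  ∃ f : X ≃ Y, (∀ a b, rX a b ↔ rY (f a) (f b)) ∧ f x = y

/-- A simulation of graphs. -/
def IsSimulation {X : Type u} {Y : Type v} (rX : X → X → Prop)
    (rY : Y → Y → Prop) (f : X → Y) : Prop :=
  (∀ a b, rX a b → rY (f a) (f b)) ∧
  (∀ x y, rY y (f x) → ∃ a, rX a x ∧ f a = y)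

/-- A bisimulation between graphs. -/
def IsBisimulation {X : Type u} {Y : Type v} (rX : X → X → Prop)
    (rY : Y → Y → Prop) (R : X → Y → Prop) : Prop :=
  ∀ x y, R x y →
    (∀ x', rX x' x → ∃ y', rY y' y ∧ R x' y') ∧
    (∀ y', rY y' y → ∃ x', rX x' x ∧ R x' y')

/-- A bi-entire relation. -/
def BiEntire {X : Type u} {Y : Type v} (R : X → Y → Prop) : Prop :=
  (∀ x, ∃ y, R x y) ∧ (∀ y, ∃ x, R x y)

/-- A path of length exactly `n` from `x` to `star`: `x = x_n ≺ x_{n-1} ≺ ⋯ ≺ x_0 = star`. -/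
def PathLen {X : Type u} (r : X → X → Prop) (n : ℕ) (x star : X) : Prop :=
  ∃ p : ℕ → X, p n = x ∧ p 0 = star ∧ ∀ i < n, r (p (i + 1)) (p i)

/-- Extensional quotients: if `(X, r, star)` is a well-founded accessible pointed graph
and `X/x` is extensional for every node `x` admitting a path of length `n` to the root,
then `X` has an extensional quotient: a well-founded extensional accessible pointed
graph together with a surjective root-preserving simulation from `X`. -/
theorem extensional_quotient {X : Type u} (r : X → X → Prop) (star : X) (n : ℕ)
    (hwf : IsWFRel r) (hacc : ∀ x, Relation.ReflTransGen r x star)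
    (hext : ∀ x, PathLen r n x star → IsExtRel (belowRel r x)) :
    ∃ (Y : Type u) (rY : Y → Y → Prop) (rootY : Y) (q : X → Y),
      IsWFRel rY ∧ IsExtRel rY ∧ (∀ z, Relation.ReflTransGen rY z rootY) ∧
      IsSimulation r rY q ∧ Function.Surjective q ∧ q star = rootY := by
  let B : X → X → Prop := fun x y => ∃ R : X → X → Prop, IsBisimulation r r R ∧ R x y
  have Bstep : ∀ x y, B x y → ∀ x', r x' x → ∃ y', r y' y ∧ B x' y' := by
    rintro x y ⟨R, hR, hxy⟩ x' hx'
    obtain ⟨y', hy', h⟩ := (hR x y hxy).1 x' hx'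
    exact ⟨y', hy', R, hR, h⟩
  have Brefl : ∀ x, B x x := by
    intro x
    refine ⟨Eq, ?_, rfl⟩
    rintro a b rfl
    exact ⟨fun c hc => ⟨c, hc, rfl⟩, fun c hc => ⟨c, hc, rfl⟩⟩
  have Bsymm : ∀ {x y}, B x y → B y x := by
    rintro x y ⟨R, hR, hxy⟩
    exact ⟨fun a b => R b a, fun a b hab => ⟨(hR b a hab).2, (hR b a hab).1⟩, hxy⟩
  have Btrans : ∀ {x y z}, B x y → B y z → B x z := by
    rintro x y z ⟨R, hR, hxy⟩ ⟨S, hS, hyz⟩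
    refine ⟨fun a c => ∃ b, R a b ∧ S b c, ?_, y, hxy, hyz⟩
    rintro a c ⟨b, hab, hbc⟩
    constructor
    · intro a' ha'
      obtain ⟨b', hb', h1⟩ := (hR a b hab).1 a' ha'
      obtain ⟨c', hc', h2⟩ := (hS b c hbc).1 b' hb'
      exact ⟨c', hc', b', h1, h2⟩
    · intro c' hc'
      obtain ⟨b', hb', h1⟩ := (hS b c hbc).2 c' hc'
      obtain ⟨a', ha', h2⟩ := (hR a b hab).2 b' hb'
      exact ⟨a', ha', b', h2, h1⟩
  let st : Setoid X := ⟨B, Brefl, Bsymm, Btrans⟩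
  let q : X → Quotient st := Quotient.mk st
  let rY : Quotient st → Quotient st → Prop := fun a b => ∃ x y, r x y ∧ q x = a ∧ q y = b
  have hq : Function.Surjective q := Quotient.mk_surjective
  have h1 : ∀ a b, r a b → rY (q a) (q b) := fun a b h => ⟨a, b, h, rfl, rfl⟩
  have h2 : ∀ x y, rY y (q x) → ∃ a, r a x ∧ q a = y := by
    rintro x y ⟨u, w, huw, rfl, hw⟩
    obtain ⟨a, ha, hB⟩ := Bstep w x (Quotient.exact hw) u huw
    exact ⟨a, ha, Quotient.sound (Bsymm hB)⟩
  refine ⟨Quotient st, rY, q star, q, ?_, ?_, ?_, ⟨h1, h2⟩, hq, rfl⟩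
  · intro S hS
    have hpre := hwf (q ⁻¹' S) (by
      intro x hx
      apply hS
      intro y hy
      obtain ⟨a, ha, rfl⟩ := h2 x y hy
      exact hx a ha)
    ext y
    obtain ⟨x, rfl⟩ := hq y
    have hx : x ∈ q ⁻¹' S := hpre ▸ Set.mem_univ x
    exact ⟨fun _ => trivial, fun _ => hx⟩
  · intro a b hab
    obtain ⟨x, rfl⟩ := hq a
    obtain ⟨y, rfl⟩ := hq b
    apply Quotient.sound
    refine ⟨fun a b => ∀ z, rY z (q a) ↔ rY z (q b), ?_, hab⟩
    intro a b h
    constructor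
    · intro a' ha'
      obtain ⟨b', hb', e⟩ := h2 b _ ((h _).1 (h1 _ _ ha'))
      exact ⟨b', hb', fun z => by rw [e]⟩
    · intro b' hb'
      obtain ⟨a', ha', e⟩ := h2 a _ ((h _).2 (h1 _ _ hb'))
      exact ⟨a', ha', fun z => by rw [e]⟩
  · intro z
    obtain ⟨x, rfl⟩ := hq z
    exact Relation.ReflTransGen.lift (r := r) (p := rY) q h1 _ _ (hacc x)
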